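/- For i ∈ {1,…,d} define the averaged two-point function Ĝ(w) = (1/2)( ⟨φ_o^1 φ_w^1⟩_{L,N,β} + ⟨φ_o^1 φ_{w_i e_i}^1⟩_{L,N,β} ) for w ∈ T_L. Let z ∈ T_L with z ≠ o and let q be a natural number such that z_i + q is even and both z_i − q and z_i + q lie in the open interval (0, L). Then Ĝ(z) − Ĝ(z − q e_i) ≤ Ĝ(z + q e_i) − Ĝ(z). -/

import Mathlib

open MeasureTheory Metric
open scoped RealInnerProductSpace BigOperators

/-- Vertices of the torus `(ℤ/Lℤ)^d`. -/
abbrev TorusPt (d L : ℕ) := Fin d → ZMod L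

/-- Nearest-neighbour adjacency on the torus: `x` and `y` differ by `±1 (mod L)`
in exactly one coordinate. -/
def torusAdj {d L : ℕ} (x y : TorusPt d L) : Prop :=
  ∃ j : Fin d, y = Function.update x j (x j + 1) ∨ y = Function.update x j (x j - 1)

instance {d L : ℕ} (x y : TorusPt d L) : Decidable (torusAdj x y) := by
  unfold torusAdj; infer_instance

/-- The unit sphere `S^{N-1} ⊂ ℝ^N`. -/
abbrev SpinSphere (N : ℕ) := sphere (0 : EuclideanSpace ℝ (Fin N)) 1

/-- A spin configuration on the torus. -/
abbrev SpinCfg (d L N : ℕ) := TorusPt d L → SpinSphere N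

/-- The uniform probability measure on the unit sphere `S^{N-1}`. -/
noncomputable def sphereUniform (N : ℕ) : Measure (SpinSphere N) :=
  ((volume : Measure (EuclideanSpace ℝ (Fin N))).toSphere Set.univ)⁻¹ •
    (volume : Measure (EuclideanSpace ℝ (Fin N))).toSphere

/-- The product over vertices of the uniform probability measures on the sphere. -/
noncomputable def spinMeasure (d L N : ℕ) [NeZero L] : Measure (SpinCfg d L N) :=
  Measure.pi fun _ : TorusPt d L => sphereUniform N

/-- The Hamiltonian `H(φ) = -∑_{{x,y} edge} φ_x · φ_y`; every unordered
nearest-neighbour edge appears exactly twice in the double sum below. -/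
noncomputable def hamiltonian {d L N : ℕ} [NeZero L] (φ : SpinCfg d L N) : ℝ :=
  -(1 / 2) * ∑ x : TorusPt d L, ∑ y : TorusPt d L,
    if torusAdj x y then
      ⟪(φ x : EuclideanSpace ℝ (Fin N)), (φ y : EuclideanSpace ℝ (Fin N))⟫
    else 0

/-- The Gibbs expectation `⟨f⟩_{L,N,β}`. -/
noncomputable def gibbsExp (d L N : ℕ) [NeZero L] (β : ℝ) (f : SpinCfg d L N → ℝ) : ℝ :=
  (∫ φ, Real.exp (-β * hamiltonian φ) ∂(spinMeasure d L N))⁻¹ *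
    ∫ φ, f φ * Real.exp (-β * hamiltonian φ) ∂(spinMeasure d L N)

/-- The spin-spin correlation `⟨φ_x ⬝ φ_y⟩_{L,N,β}`. -/
noncomputable def corrDot (d L N : ℕ) [NeZero L] (β : ℝ) (x y : TorusPt d L) : ℝ :=
  gibbsExp d L N β fun φ =>
    ⟪(φ x : EuclideanSpace ℝ (Fin N)), (φ y : EuclideanSpace ℝ (Fin N))⟫

/-- The correlation `⟨φ_x^1 φ_y^1⟩_{L,N,β}` of first components. -/
noncomputable def corrOne (d L N : ℕ) [NeZero L] [NeZero N] (β : ℝ) (x y : TorusPt d L) : ℝ :=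
  gibbsExp d L N β fun φ =>
    (φ x : EuclideanSpace ℝ (Fin N)) 0 * (φ y : EuclideanSpace ℝ (Fin N)) 0

/-- The origin of the torus. -/
def torusOrigin (d L : ℕ) : TorusPt d L := fun _ => 0

/-- The point `n • e_i` on the `i`-th cartesian axis. -/
def axisPt (d L : ℕ) (i : Fin d) (n : ℕ) : TorusPt d L :=
  fun k => if k = i then (n : ZMod L) else 0

/-- The sup torus norm `‖z‖_∞ = max_i min(z_i, L - z_i)`. -/
def tnormInf {d L : ℕ} (z : TorusPt d L) : ℕ :=
  Finset.univ.sup fun i : Fin d => min (z i).val (L - (z i).val)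

/-- The averaged two-point function
`Ĝ(w) = (⟨φ_o^1 φ_w^1⟩ + ⟨φ_o^1 φ_{w_i e_i}^1⟩)/2`. -/
noncomputable def avgTwoPoint (d L N : ℕ) [NeZero L] [NeZero N] (β : ℝ) (i : Fin d)
    (w : TorusPt d L) : ℝ :=
  (corrOne d L N β (torusOrigin d L) w +
    corrOne d L N β (torusOrigin d L) (fun k => if k = i then w i else 0)) / 2

/-!
The inequality is an instance of reflection positivity. Let `θ` negate the `i`-th coordinate; since
`L` is even, its mirrors `x_i = 0` and `x_i = L / 2` pass through sites and cut the torus into two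
halves joined by no edge, so `-H(φ) = E(φ) + E(φ ∘ θ)` with `E` depending on one closed half only.
Conditionally on the spins in the mirrors the two halves are independent and identically
distributed up to `θ`, hence `⟨f · (f ∘ θ)⟩ ≥ 0` for every `f` depending on that closed half,
whatever the sign of `β`.

Write `z = (a + b) e_i + w` with `b = a + q` and `w_i = 0`, so that `a = (z_i - q) / 2` and
`b = (z_i + q) / 2` are at most `L / 2`. The linear test function
`f = φ_{a e_i} + φ_{a e_i + w} - φ_{b e_i} - φ_{b e_i + w}` (first components) lives on the closed
half. By the symmetries of the torus `⟨f · (f ∘ θ)⟩ = 4 (Ĝ(z - q e_i) - 2 Ĝ(z) + Ĝ(z + q e_i))`.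
-/

section ProductMeasure

open scoped Classical in
theorem measurePreserving_set_piecewise {ι : Type*} [Fintype ι] {α : ι → Type*}
    [∀ i, MeasurableSpace (α i)] (μ : ∀ i, Measure (α i)) [∀ i, IsProbabilityMeasure (μ i)]
    (s : Set ι) :
    MeasurePreserving (fun p : (∀ i, α i) × (∀ i, α i) => s.piecewise p.2 p.1)
      ((Measure.pi μ).prod (Measure.pi μ)) (Measure.pi μ) := by
  have hmeas : Measurable fun p : (∀ i, α i) × (∀ i, α i) => s.piecewise p.2 p.1 := by
    refine measurable_pi_iff.2 fun i => ?_
    by_cases hi : i ∈ s <;> simp only [Set.piecewise, hi, if_true, if_false] <;> fun_prop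
  refine ⟨hmeas, (Measure.pi_eq fun t ht => ?_).symm⟩
  have hpre : (fun p : (∀ i, α i) × (∀ i, α i) => s.piecewise p.2 p.1) ⁻¹' Set.univ.pi t =
      (Set.univ.pi fun i => if i ∈ s then Set.univ else t i) ×ˢ
        (Set.univ.pi fun i => if i ∈ s then t i else Set.univ) := by
    ext p
    simp only [Set.mem_preimage, Set.mem_univ_pi, Set.mem_prod, ← forall_and]
    refine forall_congr' fun i => ?_
    by_cases hi : i ∈ s <;> simp [hi]
  rw [Measure.map_apply hmeas (.univ_pi ht), hpre, Measure.prod_prod, Measure.pi_pi,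
    Measure.pi_pi, ← Finset.prod_mul_distrib]
  refine Finset.prod_congr rfl fun i _ => ?_
  by_cases hi : i ∈ s <;> simp [hi]

open scoped Classical in
/-- The average of `f` over the coordinates in `s`, the other coordinates being frozen: the
conditional expectation under the product measure given the coordinates outside `s`. -/
noncomputable def piAverage {ι : Type*} [Fintype ι] {α : ι → Type*}
    [∀ i, MeasurableSpace (α i)] (μ : ∀ i, Measure (α i)) (s : Set ι) (f : (∀ i, α i) → ℝ)
    (φ : ∀ i, α i) : ℝ :=
  ∫ ψ, f (s.piecewise ψ φ) ∂Measure.pi μ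

section

variable {ι : Type*} [Fintype ι] {α : ι → Type*} [∀ i, MeasurableSpace (α i)]
  (μ : ∀ i, Measure (α i)) {s t : Set ι} {f g : (∀ i, α i) → ℝ}

theorem integral_piAverage [∀ i, IsProbabilityMeasure (μ i)] (s : Set ι)
    (hf : Integrable f (Measure.pi μ)) :
    ∫ φ, piAverage μ s f φ ∂Measure.pi μ = ∫ φ, f φ ∂Measure.pi μ := by
  classical
  have hmp := measurePreserving_set_piecewise μ s
  have hf_map := hf
  rw [← hmp.map_eq] at hf_map
  conv_rhs => rw [← hmp.map_eq, integral_map hmp.aemeasurable hf_map.aestronglyMeasurable]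
  exact (integral_prod _ (hmp.integrable_comp_of_integrable hf)).symm

theorem integrable_piAverage [∀ i, IsProbabilityMeasure (μ i)] (s : Set ι)
    (hf : Integrable f (Measure.pi μ)) : Integrable (piAverage μ s f) (Measure.pi μ) :=
  ((measurePreserving_set_piecewise μ s).integrable_comp_of_integrable hf).integral_prod_left

theorem piAverage_mul_left (hf : DependsOn f sᶜ) (φ : ∀ i, α i) :
    piAverage μ s (fun ψ => f ψ * g ψ) φ = f φ * piAverage μ s g φ := by
  classical
  have hfrozen (ψ : ∀ i, α i) : f (s.piecewise ψ φ) = f φ :=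
    hf fun i hi => Set.piecewise_eq_of_notMem s ψ φ hi
  simp only [piAverage, hfrozen, integral_const_mul]

theorem dependsOn_piAverage (hf : DependsOn f t) : DependsOn (piAverage μ s f) (t \ s) := by
  classical
  refine fun φ φ' h => integral_congr_ae (.of_forall fun ψ => hf fun i hi => ?_)
  by_cases his : i ∈ s
  · simp [his]
  · simpa [his] using h i ⟨hi, his⟩

end

theorem integral_comp_perm {ι S : Type*} [Fintype ι] [MeasurableSpace S] (μ : Measure S)
    [SigmaFinite μ] (σ : Equiv.Perm ι) (f : (ι → S) → ℝ) :
    ∫ φ, f (φ ∘ σ) ∂(Measure.pi fun _ => μ) = ∫ φ, f φ ∂(Measure.pi fun _ => μ) :=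
  (measurePreserving_arrowCongr' (fun _ => μ) (fun _ => μ) σ.symm (.refl S)
    fun _ => .id μ).integral_comp' f

theorem piAverage_comp_perm {ι S : Type*} [Fintype ι] [MeasurableSpace S] (μ : Measure S)
    [SigmaFinite μ] (σ : Equiv.Perm ι) (s : Set ι) (f : (ι → S) → ℝ) (φ : ι → S) :
    piAverage (fun _ => μ) s (fun ψ => f (ψ ∘ σ)) φ =
      piAverage (fun _ => μ) (σ ⁻¹' s) f (φ ∘ σ) := by
  classical
  exact integral_comp_perm μ σ fun ψ => f ((σ ⁻¹' s).piecewise ψ (φ ∘ σ))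

/-- Averaging over `s` turns `f ∘ θ` into the average of `f` over `θ ⁻¹' s`, which
depends only on sites fixed by `θ`; averaging next over `θ ⁻¹' s` leaves a square. -/
theorem integral_mul_comp_perm_nonneg {ι S : Type*} [Fintype ι] [MeasurableSpace S]
    (μ : Measure S) [IsProbabilityMeasure μ] {θ : Equiv.Perm ι} {s : Set ι}
    (hθ : ∀ x, x ∉ s → θ x ∉ s → θ x = x) {f : (ι → S) → ℝ} (hf : DependsOn f sᶜ)
    (hint : Integrable (fun φ => f φ * f (φ ∘ θ)) (Measure.pi fun _ => μ)) :
    0 ≤ ∫ φ, f φ * f (φ ∘ θ) ∂(Measure.pi fun _ => μ) := by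
  let F := piAverage (fun _ => μ) (θ ⁻¹' s) f
  have hF : DependsOn F (sᶜ \ θ ⁻¹' s) := dependsOn_piAverage _ hf
  have hF_comp (φ : ι → S) : F (φ ∘ θ) = F φ :=
    hF fun x hx => congrArg φ (hθ x hx.1 hx.2)
  have average_s (φ : ι → S) :
      piAverage (fun _ => μ) s (fun ψ => f ψ * f (ψ ∘ θ)) φ = F φ * f φ := by
    rw [piAverage_mul_left _ hf, piAverage_comp_perm, mul_comm]
    exact congrArg (· * f φ) (hF_comp φ)
  have average_preimage (φ : ι → S) :
      piAverage (fun _ => μ) (θ ⁻¹' s) (fun ψ => F ψ * f ψ) φ = F φ * F φ :=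
    piAverage_mul_left _ (hF.mono fun _ hx => hx.2) φ
  have hFf : Integrable (fun φ => F φ * f φ) (Measure.pi fun _ => μ) := by
    simpa only [← average_s] using integrable_piAverage (fun _ => μ) s hint
  calc
    0 ≤ ∫ φ, F φ * F φ ∂(Measure.pi fun _ => μ) := integral_nonneg fun φ => mul_self_nonneg _
    _ = ∫ φ, F φ * f φ ∂(Measure.pi fun _ => μ) := by
      simp only [← average_preimage]
      exact integral_piAverage _ _ hFf
    _ = ∫ φ, f φ * f (φ ∘ θ) ∂(Measure.pi fun _ => μ) := by
      simp only [← average_s]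
      exact integral_piAverage _ _ hint

end ProductMeasure

section SideWeight

variable {V : Type*}

open scoped Classical in
/-- The share of the bond `{x, y}` attributed to the side `sᶜ` of a reflection `θ`: all of it if
only the bond itself avoids `s`, half of it if its mirror image avoids `s` as well. -/
noncomputable def sideWeight (s : Set V) (θ : V → V) (x y : V) : ℝ :=
  if x ∉ s ∧ y ∉ s then (if θ x ∉ s ∧ θ y ∉ s then 1 / 2 else 1) else 0

theorem sideWeight_add_sideWeight_apply {s : Set V} {θ : V → V} (hθ : Function.Involutive θ)
    {x y : V} (hxy : (x ∉ s ∧ y ∉ s) ∨ (θ x ∉ s ∧ θ y ∉ s)) :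
    sideWeight s θ x y + sideWeight s θ (θ x) (θ y) = 1 := by
  have hx : θ (θ x) = x := hθ x
  have hy : θ (θ y) = y := hθ y
  grind [sideWeight]

theorem sum_sideWeight_mul_add_sum_sideWeight_mul_apply [Fintype V] {s : Set V}
    {θ : Equiv.Perm V} (hθ : Function.Involutive θ) {J : V → V → ℝ}
    (hJ : ∀ x y, J x y ≠ 0 → (x ∉ s ∧ y ∉ s) ∨ (θ x ∉ s ∧ θ y ∉ s)) :
    ∑ x, ∑ y, sideWeight s θ x y * J x y + ∑ x, ∑ y, sideWeight s θ x y * J (θ x) (θ y) =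
      ∑ x, ∑ y, J x y := by
  have hreflect : ∑ x, ∑ y, sideWeight s θ x y * J (θ x) (θ y) =
      ∑ x, ∑ y, sideWeight s θ (θ x) (θ y) * J x y := by
    refine Fintype.sum_equiv θ _ _ fun x => Fintype.sum_equiv θ _ _ fun y => ?_
    rw [hθ x, hθ y]
  simp only [hreflect, ← Finset.sum_add_distrib, ← add_mul]
  refine Finset.sum_congr rfl fun x _ => Finset.sum_congr rfl fun y _ => ?_
  by_cases hxy : J x y = 0
  · simp [hxy]
  · rw [sideWeight_add_sideWeight_apply hθ (hJ x y hxy), one_mul]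

end SideWeight

section Gibbs

instance instIsProbabilityMeasureSphereUniform (N : ℕ) [NeZero N] :
    IsProbabilityMeasure (sphereUniform N) := by
  have : NeZero (volume : Measure (EuclideanSpace ℝ (Fin N))).toSphere :=
    ⟨Measure.toSphere_ne_zero _⟩
  exact isProbabilityMeasureSMul

instance instIsProbabilityMeasureSpinMeasure (d L N : ℕ) [NeZero L] [NeZero N] :
    IsProbabilityMeasure (spinMeasure d L N) :=
  inferInstanceAs (IsProbabilityMeasure (Measure.pi fun _ => sphereUniform N))

variable {d L N : ℕ}

/-- The contribution `φ_x · φ_y` of the pair `(x, y)` to `-2 H(φ)`, zero unless `x` and `y` are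
neighbours. -/
noncomputable def bondProduct (φ : SpinCfg d L N) (x y : TorusPt d L) : ℝ :=
  if torusAdj x y then
    ⟪(φ x : EuclideanSpace ℝ (Fin N)), (φ y : EuclideanSpace ℝ (Fin N))⟫
  else 0

theorem bondProduct_comp {σ : Equiv.Perm (TorusPt d L)}
    (hσ : ∀ x y, torusAdj (σ x) (σ y) ↔ torusAdj x y) (φ : SpinCfg d L N) (x y : TorusPt d L) :
    bondProduct (φ ∘ σ) x y = bondProduct φ (σ x) (σ y) := by
  simp only [bondProduct, hσ, Function.comp_apply]

@[fun_prop]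
theorem continuous_bondProduct (x y : TorusPt d L) :
    Continuous fun φ : SpinCfg d L N => bondProduct φ x y := by
  unfold bondProduct
  split_ifs <;> fun_prop

variable [NeZero L]

theorem hamiltonian_eq_sum_bondProduct (φ : SpinCfg d L N) :
    hamiltonian φ = -(1 / 2) * ∑ x, ∑ y, bondProduct φ x y :=
  rfl

@[fun_prop]
theorem continuous_hamiltonian : Continuous (hamiltonian : SpinCfg d L N → ℝ) := by
  simp only [funext hamiltonian_eq_sum_bondProduct]
  fun_prop

theorem hamiltonian_comp {σ : Equiv.Perm (TorusPt d L)}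
    (hσ : ∀ x y, torusAdj (σ x) (σ y) ↔ torusAdj x y) (φ : SpinCfg d L N) :
    hamiltonian (φ ∘ σ) = hamiltonian φ := by
  simp only [hamiltonian_eq_sum_bondProduct, bondProduct_comp hσ]
  congr 1
  exact Fintype.sum_equiv σ _ _ fun x => Fintype.sum_equiv σ _ _ fun y => rfl

theorem gibbsExp_comp [NeZero N] (β : ℝ) {σ : Equiv.Perm (TorusPt d L)}
    (hσ : ∀ x y, torusAdj (σ x) (σ y) ↔ torusAdj x y) (f : SpinCfg d L N → ℝ) :
    gibbsExp d L N β (fun φ => f (φ ∘ σ)) = gibbsExp d L N β f := by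
  have hcomp := integral_comp_perm (sphereUniform N) σ fun φ : SpinCfg d L N =>
    f φ * Real.exp (-β * hamiltonian φ)
  simp only [hamiltonian_comp hσ] at hcomp
  unfold gibbsExp
  congr 1

theorem integrable_spinMeasure [NeZero N] {f : SpinCfg d L N → ℝ} (hf : Continuous f) :
    Integrable f (spinMeasure d L N) :=
  hf.integrable_of_hasCompactSupport (.of_compactSpace f)

theorem gibbsExp_sum_mul [NeZero N] {ι : Type*} [Fintype ι] (β : ℝ) (c : ι → ℝ)
    {f : ι → SpinCfg d L N → ℝ} (hf : ∀ j, Continuous (f j)) :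
    gibbsExp d L N β (fun φ => ∑ j, c j * f j φ) = ∑ j, c j * gibbsExp d L N β (f j) := by
  have hint (j : ι) : Integrable (fun φ => c j * (f j φ * Real.exp (-β * hamiltonian φ)))
      (spinMeasure d L N) :=
    integrable_spinMeasure (by have := hf j; fun_prop)
  simp only [gibbsExp, Finset.sum_mul, mul_assoc]
  rw [integral_finsetSum _ fun j _ => hint j, Finset.mul_sum]
  simp only [integral_const_mul, mul_left_comm]

/-- An involutive automorphism `θ` of the torus acting as a reflection through sites: outside the
half `s` and its mirror image `θ` is the identity, and every edge lies within one of the two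
closed halves `sᶜ` and `θ ⁻¹' sᶜ`. -/
structure IsSiteReflection (θ : Equiv.Perm (TorusPt d L)) (s : Set (TorusPt d L)) : Prop where
  involutive : Function.Involutive θ
  torusAdj_iff : ∀ x y, torusAdj (θ x) (θ y) ↔ torusAdj x y
  apply_eq_self : ∀ x, x ∉ s → θ x ∉ s → θ x = x
  edge_cover : ∀ x y, torusAdj x y → (x ∉ s ∧ y ∉ s) ∨ (θ x ∉ s ∧ θ y ∉ s)

/-- The share of `-H(φ)` attributed to the side `sᶜ` of a site reflection `θ`. -/
noncomputable def sideEnergy (s : Set (TorusPt d L)) (θ : TorusPt d L → TorusPt d L)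
    (φ : SpinCfg d L N) : ℝ :=
  1 / 2 * ∑ x, ∑ y, sideWeight s θ x y * bondProduct φ x y

@[fun_prop]
theorem continuous_sideEnergy (s : Set (TorusPt d L)) (θ : TorusPt d L → TorusPt d L) :
    Continuous (sideEnergy s θ : SpinCfg d L N → ℝ) := by
  unfold sideEnergy
  fun_prop

theorem dependsOn_sideEnergy (s : Set (TorusPt d L)) (θ : TorusPt d L → TorusPt d L) :
    DependsOn (sideEnergy s θ : SpinCfg d L N → ℝ) sᶜ := by
  intro φ ψ h
  unfold sideEnergy
  congr 1
  refine Finset.sum_congr rfl fun x _ => Finset.sum_congr rfl fun y _ => ?_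
  by_cases hxy : x ∉ s ∧ y ∉ s
  · rw [bondProduct, bondProduct, h x hxy.1, h y hxy.2]
  · simp only [sideWeight, hxy, if_false, zero_mul]

namespace IsSiteReflection

variable {θ : Equiv.Perm (TorusPt d L)} {s : Set (TorusPt d L)}

theorem sideEnergy_add_sideEnergy_comp (hθ : IsSiteReflection θ s) (φ : SpinCfg d L N) :
    sideEnergy s θ φ + sideEnergy s θ (φ ∘ θ) = -hamiltonian φ := by
  have hcover (x y : TorusPt d L) (hxy : bondProduct φ x y ≠ 0) :
      (x ∉ s ∧ y ∉ s) ∨ (θ x ∉ s ∧ θ y ∉ s) :=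
    hθ.edge_cover x y (of_not_not fun hadj => hxy (if_neg hadj))
  simp only [sideEnergy, bondProduct_comp hθ.torusAdj_iff, hamiltonian_eq_sum_bondProduct]
  rw [← mul_add, sum_sideWeight_mul_add_sum_sideWeight_mul_apply hθ.involutive hcover]
  ring

theorem gibbsExp_mul_comp_nonneg [NeZero N] (hθ : IsSiteReflection θ s) (β : ℝ)
    {f : SpinCfg d L N → ℝ} (hf : Continuous f) (hdep : DependsOn f sᶜ) :
    0 ≤ gibbsExp d L N β fun φ => f φ * f (φ ∘ θ) := by
  let g : SpinCfg d L N → ℝ := fun φ => f φ * Real.exp (β * sideEnergy s θ φ)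
  have hg : DependsOn g sᶜ := fun φ ψ h => by
    simp only [g, hdep h, dependsOn_sideEnergy s θ h]
  have hweight (φ : SpinCfg d L N) :
      f φ * f (φ ∘ θ) * Real.exp (-β * hamiltonian φ) = g φ * g (φ ∘ θ) := by
    rw [neg_mul, ← mul_neg, ← hθ.sideEnergy_add_sideEnergy_comp φ, mul_add, Real.exp_add]
    exact mul_mul_mul_comm _ _ _ _
  have hint : Integrable (fun φ => g φ * g (φ ∘ θ)) (spinMeasure d L N) :=
    integrable_spinMeasure (by fun_prop)
  refine mul_nonneg (inv_nonneg.2 (integral_nonneg fun φ => (Real.exp_pos _).le)) ?_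
  simp only [hweight]
  exact integral_mul_comp_perm_nonneg _ hθ.apply_eq_self hg hint

theorem sum_mul_corrOne_nonneg [NeZero N] (hθ : IsSiteReflection θ s) (β : ℝ) {ι : Type*}
    [Fintype ι] (c : ι → ℝ) {p : ι → TorusPt d L} (hp : ∀ j, p j ∉ s) :
    0 ≤ ∑ j, ∑ k, c j * c k * corrOne d L N β (p j) (θ (p k)) := by
  let f : SpinCfg d L N → ℝ := fun φ => ∑ j, c j * (φ (p j) : EuclideanSpace ℝ (Fin N)) 0
  have hdep : DependsOn f sᶜ := fun φ ψ h => by simp only [f, h _ (hp _)]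
  have hexpand (φ : SpinCfg d L N) : f φ * f (φ ∘ θ) = ∑ jk : ι × ι, c jk.1 * c jk.2 *
      ((φ (p jk.1) : EuclideanSpace ℝ (Fin N)) 0 *
        (φ (θ (p jk.2)) : EuclideanSpace ℝ (Fin N)) 0) := by
    rw [Finset.sum_mul_sum, Fintype.sum_prod_type]
    simp only [mul_mul_mul_comm, Function.comp_apply]
  have hnonneg := hθ.gibbsExp_mul_comp_nonneg β (f := f) (by fun_prop) hdep
  simp only [hexpand] at hnonneg
  rwa [gibbsExp_sum_mul β _ fun jk => by fun_prop, Fintype.sum_prod_type] at hnonneg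

end IsSiteReflection

end Gibbs

section TorusGeometry

variable {d L : ℕ}

theorem torusAdj_iff_sub (x y : TorusPt d L) :
    torusAdj x y ↔ ∃ j, y - x = Pi.single j 1 ∨ y - x = Pi.single j (-1) := by
  have hupdate (j : Fin d) (a : ZMod L) :
      y = Function.update x j (x j + a) ↔ y - x = Pi.single j a := by
    rw [sub_eq_iff_eq_add, Pi.update_eq_sub_add_single, Pi.single_add]
    constructor <;> rintro rfl <;> abel
  simp only [torusAdj, hupdate, sub_eq_add_neg (x _)]

theorem torusAdj_add_right (t x y : TorusPt d L) :
    torusAdj (x + t) (y + t) ↔ torusAdj x y := by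
  simp only [torusAdj_iff_sub, add_sub_add_right_eq_sub]

/-- The reflection of the torus negating the `i`-th coordinate. -/
def coordReflection (i : Fin d) : Equiv.Perm (TorusPt d L) :=
  Function.Involutive.toPerm (fun x => Function.update x i (-x i)) fun x => by simp

@[simp]
theorem coordReflection_apply (i : Fin d) (x : TorusPt d L) :
    coordReflection i x = Function.update x i (-x i) :=
  rfl

theorem coordReflection_involutive (i : Fin d) :
    Function.Involutive (coordReflection i : TorusPt d L → TorusPt d L) :=
  fun x => by simp

theorem coordReflection_sub (i : Fin d) (x y : TorusPt d L) :
    coordReflection i (x - y) = coordReflection i x - coordReflection i y := by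
  simp only [coordReflection_apply, ← Function.update_sub, Pi.sub_apply, neg_sub_neg, neg_sub]

theorem coordReflection_single (i j : Fin d) (a : ZMod L) :
    coordReflection i (Pi.single j a) = Pi.single j (if j = i then -a else a) := by
  ext k
  by_cases hk : k = i <;> by_cases hj : j = i <;> by_cases hkj : k = j <;> aesop

theorem torusAdj_coordReflection (i : Fin d) (x y : TorusPt d L) :
    torusAdj (coordReflection i x) (coordReflection i y) ↔ torusAdj x y := by
  have preserves (u v : TorusPt d L) (h : torusAdj u v) :
      torusAdj (coordReflection i u) (coordReflection i v) := by
    obtain ⟨j, h⟩ := (torusAdj_iff_sub u v).1 h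
    refine (torusAdj_iff_sub _ _).2 ⟨j, ?_⟩
    rw [← coordReflection_sub]
    rcases h with h | h <;> rw [h, coordReflection_single] <;> split_ifs <;> simp
  refine ⟨fun h => ?_, preserves x y⟩
  simpa only [coordReflection_involutive i _] using preserves _ _ h

theorem torusAdj_apply_cases {x y : TorusPt d L} (h : torusAdj x y) (i : Fin d) :
    y i = x i ∨ y i = x i + 1 ∨ x i = y i + 1 := by
  obtain ⟨j, rfl | rfl⟩ := h <;> by_cases hj : i = j <;> aesop

/-- The open half of the torus in which the `i`-th coordinate, represented in `{0, …, L - 1}`,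
exceeds `L / 2`. -/
def upperHalf (i : Fin d) : Set (TorusPt d L) := {x | L < 2 * (x i).val}

theorem notMem_upperHalf {i : Fin d} {x : TorusPt d L} :
    x ∉ upperHalf i ↔ 2 * (x i).val ≤ L := by
  simp [upperHalf]

variable [NeZero L]

theorem two_mul_val_le_or_two_mul_val_neg_le (a : ZMod L) :
    2 * a.val ≤ L ∨ 2 * (-a).val ≤ L := by
  rw [ZMod.neg_val]
  split_ifs <;> omega

theorem two_mul_val_le_and_or_neg_of_eq_add_one (hL : Even L) {a b : ZMod L} (hab : b = a + 1) :
    (2 * a.val ≤ L ∧ 2 * b.val ≤ L) ∨ (2 * (-a).val ≤ L ∧ 2 * (-b).val ≤ L) := by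
  have hb : b.val = (a.val + 1) % L := by
    rw [hab, ← ZMod.val_natCast, Nat.cast_add, ZMod.natCast_zmod_val, Nat.cast_one]
  have ha := a.val_lt
  obtain ⟨m, hm⟩ := hL
  simp only [ZMod.neg_val, ← ZMod.val_eq_zero]
  rcases (Nat.succ_le_of_lt ha).lt_or_eq with hlt | heq
  · rw [Nat.mod_eq_of_lt hlt] at hb
    split_ifs <;> omega
  · rw [← Nat.succ_eq_add_one, heq, Nat.mod_self] at hb
    split_ifs <;> omega

theorem neg_eq_self_of_two_mul_val_le {a : ZMod L} (ha : 2 * a.val ≤ L)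
    (hna : 2 * (-a).val ≤ L) : -a = a := by
  apply ZMod.val_injective
  rw [ZMod.neg_val] at hna ⊢
  split_ifs at hna ⊢ with h
  · simp [h]
  · omega

theorem isSiteReflection_coordReflection (hL : Even L) (i : Fin d) :
    IsSiteReflection (coordReflection i) (upperHalf (L := L) i) where
  involutive := coordReflection_involutive i
  torusAdj_iff := torusAdj_coordReflection i
  apply_eq_self x hx hθx := by
    simp only [notMem_upperHalf, coordReflection_apply, Function.update_self] at hx hθx
    rw [coordReflection_apply, neg_eq_self_of_two_mul_val_le hx hθx, Function.update_eq_self]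
  edge_cover x y hxy := by
    simp only [notMem_upperHalf, coordReflection_apply, Function.update_self]
    rcases torusAdj_apply_cases hxy i with h | h | h
    · simpa only [h, and_self] using two_mul_val_le_or_two_mul_val_neg_le (x i)
    · exact two_mul_val_le_and_or_neg_of_eq_add_one hL h
    · exact (two_mul_val_le_and_or_neg_of_eq_add_one hL h).imp And.symm And.symm

end TorusGeometry

section TwoPoint

variable {d L N : ℕ} [NeZero L] [NeZero N] (β : ℝ)

theorem corrOne_comm (x y : TorusPt d L) : corrOne d L N β x y = corrOne d L N β y x := by
  simp only [corrOne, mul_comm]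

theorem corrOne_apply_apply {σ : Equiv.Perm (TorusPt d L)}
    (hσ : ∀ x y, torusAdj (σ x) (σ y) ↔ torusAdj x y) (x y : TorusPt d L) :
    corrOne d L N β (σ x) (σ y) = corrOne d L N β x y :=
  gibbsExp_comp β hσ fun φ : SpinCfg d L N =>
    (φ x : EuclideanSpace ℝ (Fin N)) 0 * (φ y : EuclideanSpace ℝ (Fin N)) 0

theorem corrOne_eq_zero_sub (x y : TorusPt d L) :
    corrOne d L N β x y = corrOne d L N β 0 (y - x) := by
  rw [← corrOne_apply_apply β (σ := Equiv.addRight x) (torusAdj_add_right x) 0 (y - x)]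
  simp only [Equiv.coe_addRight, zero_add, sub_add_cancel]

theorem corrOne_zero_neg (w : TorusPt d L) :
    corrOne d L N β 0 (-w) = corrOne d L N β 0 w := by
  rw [corrOne_comm, corrOne_eq_zero_sub, sub_neg_eq_add, zero_add]

theorem corrOne_zero_coordReflection (i : Fin d) (w : TorusPt d L) :
    corrOne d L N β 0 (coordReflection i w) = corrOne d L N β 0 w := by
  simpa using corrOne_apply_apply (N := N) β (torusAdj_coordReflection i) 0 w

theorem corrOne_zero_update_neg (i : Fin d) (w : TorusPt d L) (c : ZMod L) :
    corrOne d L N β 0 (Function.update (-w) i c) =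
      corrOne d L N β 0 (Function.update w i c) := by
  rw [← corrOne_zero_neg, ← corrOne_zero_coordReflection β i, ← Function.update_neg]
  simp

theorem corrOne_update_coordReflection_update (i : Fin d) (u v : TorusPt d L) (a b : ZMod L) :
    corrOne d L N β (Function.update u i a) (coordReflection i (Function.update v i b)) =
      corrOne d L N β 0 (Function.update (v - u) i (a + b)) := by
  rw [corrOne_eq_zero_sub, ← corrOne_zero_coordReflection β i, coordReflection_sub,
    coordReflection_involutive, coordReflection_apply, Function.update_idem,
    Function.update_self, ← Function.update_sub, sub_neg_eq_add, add_comm b a]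

theorem avgTwoPoint_update (i : Fin d) (w : TorusPt d L) (c : ZMod L) :
    avgTwoPoint d L N β i (Function.update w i c) =
      (corrOne d L N β 0 (Function.update w i c) +
        corrOne d L N β 0 (Function.update 0 i c)) / 2 := by
  have haxis : (fun k => if k = i then Function.update w i c i else 0) =
      Function.update (0 : TorusPt d L) i c := by
    ext k
    simp [Function.update_apply]
  rw [avgTwoPoint, haxis]
  rfl

/-- Reflection positivity for the test function
`φ_{a e_i} + φ_{a e_i + w'} - φ_{b e_i} - φ_{b e_i + w'}`, where `w'` is `w` with its `i`-th
coordinate set to zero. -/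
theorem two_mul_avgTwoPoint_update_add_le (hL : Even L) (i : Fin d) (w : TorusPt d L)
    {a b : ZMod L} (ha : 2 * a.val ≤ L) (hb : 2 * b.val ≤ L) :
    2 * avgTwoPoint d L N β i (Function.update w i (a + b)) ≤
      avgTwoPoint d L N β i (Function.update w i (a + a)) +
        avgTwoPoint d L N β i (Function.update w i (b + b)) := by
  let c : Fin 2 × Fin 2 → ℝ := fun j => ![1, -1] j.1
  let p : Fin 2 × Fin 2 → TorusPt d L := fun j => Function.update (![0, w] j.2) i (![a, b] j.1)
  have hp (j : Fin 2 × Fin 2) : p j ∉ upperHalf i := by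
    obtain ⟨j, k⟩ := j
    fin_cases j <;> simpa [p, notMem_upperHalf]
  have hpos := (isSiteReflection_coordReflection hL i).sum_mul_corrOne_nonneg (N := N) β c hp
  simp only [p, c, corrOne_update_coordReflection_update, Fintype.sum_prod_type,
    Fin.sum_univ_two, Matrix.cons_val_zero, Matrix.cons_val_one, sub_self, sub_zero, zero_sub,
    corrOne_zero_update_neg, add_comm b a] at hpos
  simp only [avgTwoPoint_update]
  linarith

end TwoPoint

theorem spin_avg_two_point_convexity_general
    (d L N : ℕ) [NeZero L] [NeZero N] (hL : Even L) (β : ℝ) (z : TorusPt d L) (i : Fin d)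
    (q : ℕ) (hpar : Even ((z i).val + q)) (hlow : q ≤ (z i).val) (hhigh : (z i).val + q ≤ L) :
    avgTwoPoint d L N β i z -
        avgTwoPoint d L N β i (Function.update z i (z i - (q : ZMod L))) ≤
      avgTwoPoint d L N β i (Function.update z i (z i + (q : ZMod L))) -
        avgTwoPoint d L N β i z := by
  obtain ⟨b, hb⟩ := hpar
  obtain ⟨a, rfl⟩ : ∃ a, b = a + q := ⟨b - q, by omega⟩
  have hzi : z i = (a : ZMod L) + (a + q : ℕ) := by
    rw [← Nat.cast_add, ← ZMod.natCast_zmod_val (z i)]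
    congr 1
    omega
  have hsub : z i - q = (a : ZMod L) + a := by
    rw [hzi]
    push_cast
    ring
  have hadd : z i + q = ((a + q : ℕ) : ZMod L) + (a + q : ℕ) := by
    rw [hzi]
    push_cast
    ring
  have hmid := two_mul_avgTwoPoint_update_add_le (N := N) β hL i z
    (a := a) (b := (a + q : ℕ)) (by grw [ZMod.val_natCast, Nat.mod_le]; omega)
    (by grw [ZMod.val_natCast, Nat.mod_le]; omega)
  rw [← hzi, ← hsub, ← hadd, Function.update_eq_self] at hmid
  linarith

/-- **Convexity of the averaged two-point function of the spin O(N) model.**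
If `z ≠ o`, `z_i + q` is even and `z_i - q, z_i + q ∈ (0, L)`, then
`Ĝ(z) - Ĝ(z - q e_i) ≤ Ĝ(z + q e_i) - Ĝ(z)`. -/
theorem spin_avg_two_point_convexity
    (d L N : ℕ) [NeZero L] [NeZero N] (hd : 2 ≤ d) (hL : Even L)
    (β : ℝ) (hβ : 0 ≤ β) (z : TorusPt d L) (hz : z ≠ torusOrigin d L) (i : Fin d)
    (q : ℕ) (hpar : Even ((z i).val + q))
    (hlow : q < (z i).val) (hhigh : (z i).val + q < L) :
    avgTwoPoint d L N β i z -
        avgTwoPoint d L N β i (Function.update z i (z i - (q : ZMod L))) ≤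
      avgTwoPoint d L N β i (Function.update z i (z i + (q : ZMod L))) -
        avgTwoPoint d L N β i z :=
  spin_avg_two_point_convexity_general d L N hL β z i q hpar hlow.le hhigh.le
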